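/- Let k be an integer with k ≥ 1, and let Δ′ ≥ 0 and ε > 0 satisfy kε ≥ 2(ε + Δ′). Let x, y ∈ ℝ with |x − y| ≤ Δ′. Let z̃ be the stochastic rounding of x/ε (an integer-valued random variable supported on {⌊x/ε⌋, ⌈x/ε⌉} with E[z̃] = x/ε), set w = z̃ mod k, and let Q_M(x,y) = (ẑk + w)·ε where ẑ minimizes |(zk + w)·ε − y| over z ∈ ℤ. Then Q_M(x,y) = z̃ε almost surely; consequently E[Q_M(x,y)] = x and |Q_M(x,y) − x| ≤ ε almost surely. In particular, for k > 2 and ε = 2Δ′/(k−2), one has |Q_M(x,y) − x| ≤ 2Δ′/(k−2) almost surely. -/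

import Mathlib

open MeasureTheory

/-- Guarantee for the Modulo Quantizer.  Let `k ≥ 1`, `Δ' ≥ 0`, `ε > 0` with
`kε ≥ 2(ε + Δ')`, and `x, y ∈ ℝ` with `|x − y| ≤ Δ'`.  Let `z̃` be the stochastic rounding of
`x/ε` (an integer-valued random variable supported on `{⌊x/ε⌋, ⌈x/ε⌉}` with `E[z̃] = x/ε`),
`w = z̃ mod k`, and let the decoded output be `Q_M(x,y) = (ẑk + w)·ε` where `ẑ` minimizes
`|(zk + w)·ε − y|` over `z ∈ ℤ`.  Then `Q_M(x,y) = z̃ε` a.s.; consequently `E[Q_M(x,y)] = x`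
and `|Q_M(x,y) − x| ≤ ε` a.s.  In particular, for `k > 2` and `ε = 2Δ'/(k−2)` one has
`|Q_M(x,y) − x| ≤ 2Δ'/(k−2)` a.s. -/
theorem stmt_3 {Ω : Type*} [MeasurableSpace Ω] (μ : Measure Ω) [IsProbabilityMeasure μ]
    (k : ℕ) (hk : 1 ≤ k) (Δ' ε : ℝ) (hΔ' : 0 ≤ Δ') (hε : 0 < ε)
    (hkε : (k : ℝ) * ε ≥ 2 * (ε + Δ'))
    (x y : ℝ) (hxy : |x - y| ≤ Δ')
    (zt : Ω → ℤ) (hztmeas : Measurable zt)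
    (hsupp : ∀ᵐ ω ∂μ, zt ω = ⌊x / ε⌋ ∨ zt ω = ⌈x / ε⌉)
    (hunbiased : (∫ ω, (zt ω : ℝ) ∂μ) = x / ε)
    (zh : Ω → ℤ) (hzhmeas : Measurable zh)
    (hargmin : ∀ ω, ∀ z : ℤ,
      |((zh ω * k + zt ω % k : ℤ) : ℝ) * ε - y| ≤ |((z * k + zt ω % k : ℤ) : ℝ) * ε - y|) :
    (∀ᵐ ω ∂μ, ((zh ω * k + zt ω % k : ℤ) : ℝ) * ε = (zt ω : ℝ) * ε) ∧
    ((∫ ω, ((zh ω * k + zt ω % k : ℤ) : ℝ) * ε ∂μ) = x) ∧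
    (∀ᵐ ω ∂μ, |((zh ω * k + zt ω % k : ℤ) : ℝ) * ε - x| ≤ ε) ∧
    (2 < k → ε = 2 * Δ' / ((k : ℝ) - 2) →
      ∀ᵐ ω ∂μ, |((zh ω * k + zt ω % k : ℤ) : ℝ) * ε - x| ≤ 2 * Δ' / ((k : ℝ) - 2)) := by
  have hclose : ∀ᵐ ω ∂μ, |(zt ω : ℝ) * ε - x| < ε := by
    filter_upwards [hsupp] with ω hω
    have hx : x / ε * ε = x := div_mul_cancel₀ x hε.ne'
    have h1 : |(zt ω : ℝ) - x / ε| < 1 := by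
      rw [abs_lt]
      rcases hω with h | h
      · rw [h]
        constructor <;> linarith [Int.floor_le (x / ε), Int.lt_floor_add_one (x / ε)]
      · rw [h]
        constructor <;> linarith [Int.le_ceil (x / ε), Int.ceil_lt_add_one (x / ε)]
    have h2 : (zt ω : ℝ) * ε - x = ((zt ω : ℝ) - x / ε) * ε := by
      rw [sub_mul, hx]
    rw [h2, abs_mul, abs_of_pos hε]
    nlinarith
  have hmain : ∀ᵐ ω ∂μ, ((zh ω * k + zt ω % k : ℤ) : ℝ) * ε = (zt ω : ℝ) * ε := by
    filter_upwards [hclose] with ω hω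
    have hdiv : zt ω / k * k + zt ω % k = zt ω := Int.ediv_mul_add_emod _ _
    have hmin := hargmin ω (zt ω / k)
    rw [hdiv] at hmin
    have hy : |(zt ω : ℝ) * ε - y| < ε + Δ' := by
      rw [abs_lt] at hω ⊢
      rw [abs_le] at hxy
      constructor <;> linarith [hω.1, hω.2, hxy.1, hxy.2]
    have hy2 := lt_of_le_of_lt hmin hy
    have hkε0 : 0 < (k : ℝ) * ε := by
      have : (0 : ℝ) < k := by exact_mod_cast hk
      positivity
    have hQ : ((zh ω * k + zt ω % k : ℤ) : ℝ) * ε - (zt ω : ℝ) * ε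
        = ((zh ω - zt ω / k : ℤ) : ℝ) * (k * ε) := by
      have h3 : zh ω * k + zt ω % k = (zh ω - zt ω / k) * k + zt ω := by
        linear_combination hdiv
      rw [h3]
      push_cast
      ring
    have hlt : |((zh ω - zt ω / k : ℤ) : ℝ) * (k * ε)| < k * ε := by
      rw [← hQ]
      rw [abs_lt] at hy hy2 ⊢
      constructor <;> linarith [hy.1, hy.2, hy2.1, hy2.2]
    rw [abs_mul, abs_of_pos hkε0] at hlt
    have hlt1 : |((zh ω - zt ω / k : ℤ) : ℝ)| < 1 := by
      by_contra hcon
      push Not at hcon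
      nlinarith
    have hz : zh ω - zt ω / k = 0 := by
      rw [← Int.abs_lt_one_iff]
      exact_mod_cast hlt1
    rw [hz] at hQ
    simp only [Int.cast_zero, zero_mul] at hQ
    linarith
  have hbound : ∀ᵐ ω ∂μ, |((zh ω * k + zt ω % k : ℤ) : ℝ) * ε - x| ≤ ε := by
    filter_upwards [hclose, hmain] with ω h1 h2
    rw [h2]
    exact h1.le
  refine ⟨hmain, ?_, hbound, ?_⟩
  · rw [integral_congr_ae hmain, integral_mul_const, hunbiased]
    exact div_mul_cancel₀ x hε.ne'
  · intro _ h
    rw [← h]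
    exact hbound
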